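/- Let 0 ≤ r ≤ l be integers. The polynomial P^l_{rr} has degree exactly l, its leading coefficient (coefficient of z^l) equals (2l)! / (2^l · (l+r)! · (l−r)!), and P^l_{rr}(1) = 1. -/

import Mathlib

/-!
The function under the derivative is `(-1) ^ (l - r) * G` with `G = (z - 1) ^ (l - r) (z + 1) ^ (l + r)`
monic of degree `2l`, so the signs cancel and everything is read off `E`, the `(l - r)`-th derivative
of `G`:

* `E` is divisible by `(z + 1) ^ ((l + r) - (l - r)) = (z + 1) ^ (2r)`, hence by `(z + 1) ^ r`, so the
  quotient `E / (z + 1) ^ r` is a polynomial;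
* `E` has degree `2l - (l - r) = l + r` and leading coefficient `(2l)! / (l + r)!`, and division by the
  monic `(z + 1) ^ r` lowers the degree to `l` and keeps the leading coefficient;
* at `z = 1` only the term of the Leibniz rule in which all derivatives hit `(z - 1) ^ (l - r)`
  survives, so `E 1 = (l - r)! * 2 ^ (l + r)`.
-/

/-- The Legendre function P^l_{rr} given by the Rodrigues-type formula
P^l_{rr}(z) = ((−1)^{l−r} / (2^l (l−r)!)) · (1+z)^{−r} · d^{l−r}/dz^{l−r}[(1−z)^{l−r}(1+z)^{l+r}]. -/
noncomputable def legP (l r : ℕ) (z : ℝ) : ℝ :=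
  ((-1 : ℝ) ^ (l - r) / (2 ^ l * ((l - r).factorial : ℝ))) *
    (deriv^[l - r] (fun w : ℝ => (1 - w) ^ (l - r) * (1 + w) ^ (l + r)) z) / (1 + z) ^ r

open Polynomial in
theorem iterate_deriv_eval (p : ℝ[X]) (k : ℕ) :
    deriv^[k] (fun w => p.eval w) = fun w => (derivative^[k] p).eval w := by
  induction k generalizing p with
  | zero => rfl
  | succ k ih =>
    rw [Function.iterate_succ_apply, Function.iterate_succ_apply, ← ih]
    congr 1
    funext w
    exact p.deriv

open Polynomial in
/-- `(X - 1) ^ n * (X + 1) ^ (n + 2r)`, the function differentiated in the Rodrigues formula for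
`l = r + n`, normalized to be monic. -/
noncomputable def rodPoly (n r : ℕ) : ℝ[X] := (X - C 1) ^ n * (X + C 1) ^ (n + 2 * r)

open Polynomial in
theorem legP_eq (n r : ℕ) (z : ℝ) :
    legP (r + n) r z = 1 / (2 ^ (r + n) * (n.factorial : ℝ)) *
      (derivative^[n] (rodPoly n r)).eval z / (1 + z) ^ r := by
  have hf : (fun w : ℝ => (1 - w) ^ n * (1 + w) ^ (r + n + r)) =
      fun w => (C ((-1 : ℝ) ^ n) * rodPoly n r).eval w := by
    funext w
    simp only [rodPoly, eval_mul, eval_pow, eval_sub, eval_add, eval_X, eval_C]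
    rw [← mul_assoc, ← mul_pow]
    congr 2 <;> ring
  have hs : (-1 : ℝ) ^ n * (-1) ^ n = 1 := by rw [← mul_pow]; simp
  unfold legP
  rw [Nat.add_sub_cancel_left, hf, iterate_deriv_eval, iterate_derivative_C_mul]
  simp only [eval_mul, eval_C]
  rw [← mul_assoc, div_mul_eq_mul_div, hs]

open Polynomial in
theorem rodPoly_monic (n r : ℕ) : (rodPoly n r).Monic :=
  ((monic_X_sub_C 1).pow n).mul ((monic_X_add_C 1).pow _)

open Polynomial in
theorem rodPoly_natDegree (n r : ℕ) : (rodPoly n r).natDegree = 2 * (r + n) := by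
  rw [rodPoly, Monic.natDegree_mul ((monic_X_sub_C 1).pow n) ((monic_X_add_C 1).pow _),
    natDegree_pow, natDegree_pow, natDegree_X_sub_C, natDegree_X_add_C]
  ring

open Polynomial in
theorem coeff_derivative_rodPoly (n r : ℕ) :
    (derivative^[n] (rodPoly n r)).coeff (r + n + r) =
      ((2 * (r + n)).descFactorial n : ℝ) := by
  have hm : (rodPoly n r).coeff (2 * (r + n)) = 1 := by
    rw [← rodPoly_natDegree]; exact rodPoly_monic n r
  rw [coeff_iterate_derivative, show r + n + r + n = 2 * (r + n) by ring, hm, nsmul_one]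

open Polynomial in
theorem natDegree_derivative_rodPoly (n r : ℕ) :
    (derivative^[n] (rodPoly n r)).natDegree = r + n + r := by
  refine natDegree_eq_of_le_of_coeff_ne_zero ?_ ?_
  · refine (natDegree_iterate_derivative _ _).trans ?_
    rw [rodPoly_natDegree]
    omega
  · rw [coeff_derivative_rodPoly, Nat.cast_ne_zero, Ne, Nat.descFactorial_eq_zero_iff_lt]
    omega

open Polynomial in
theorem eval_one_derivative_rodPoly (n r : ℕ) :
    (derivative^[n] (rodPoly n r)).eval 1 = (n.factorial : ℝ) * 2 ^ (n + 2 * r) := by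
  have h := aeval_iterate_derivative_self (A := ℝ) (rodPoly n r) n 1
    (p' := (X + C 1) ^ (n + 2 * r)) (by simp [rodPoly])
  rw [coe_aeval_eq_eval] at h
  rw [h, nsmul_eq_mul]
  norm_num

/-- P^l_{rr} is a polynomial of degree exactly l, with leading coefficient
(2l)! / (2^l (l+r)! (l−r)!), and P^l_{rr}(1) = 1. -/
theorem statement11 (r l : ℕ) (h : r ≤ l) :
    ∃ P : Polynomial ℝ,
      (∀ z : ℝ, 1 + z ≠ 0 → P.eval z = legP l r z) ∧
      P.degree = l ∧
      P.coeff l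
        = ((2 * l).factorial : ℝ) / (2 ^ l * ((l + r).factorial : ℝ) * ((l - r).factorial : ℝ)) ∧
      legP l r 1 = 1 := by
  open Polynomial in
  obtain ⟨n, rfl⟩ := Nat.exists_eq_add_of_le h
  rw [Nat.add_sub_cancel_left]
  have hn : (n.factorial : ℝ) ≠ 0 := by positivity
  have hdvd : (X + C (1 : ℝ)) ^ r ∣ derivative^[n] (rodPoly n r) :=
    (pow_dvd_pow _ (by omega : r ≤ n + 2 * r - n)).trans
      (pow_sub_dvd_iterate_derivative_of_pow_dvd n (Dvd.intro_left _ rfl))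
  obtain ⟨Q, hQ⟩ := hdvd
  have hmon : ((X + C (1 : ℝ)) ^ r).Monic := (monic_X_add_C 1).pow r
  have hE := natDegree_derivative_rodPoly n r
  have hlead : Q.leadingCoeff = ((2 * (r + n)).descFactorial n : ℝ) := by
    rw [← leadingCoeff_monic_mul hmon, ← hQ, leadingCoeff, hE, coeff_derivative_rodPoly]
  have hfac : ((r + n + r).factorial : ℝ) * ((2 * (r + n)).descFactorial n : ℝ) =
      ((2 * (r + n)).factorial : ℝ) := by
    have := Nat.factorial_mul_descFactorial (show n ≤ 2 * (r + n) by omega)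
    rw [show 2 * (r + n) - n = r + n + r by omega] at this
    exact_mod_cast this
  have hQ0 : Q ≠ 0 := by
    rintro rfl
    rw [leadingCoeff_zero] at hlead
    rw [← hlead, mul_zero] at hfac
    exact Nat.factorial_ne_zero _ (by exact_mod_cast hfac.symm)
  have hdeg : Q.natDegree = r + n := by
    rw [hQ, hmon.natDegree_mul' hQ0, natDegree_pow, natDegree_X_add_C] at hE
    omega
  have hc : (1 / (2 ^ (r + n) * (n.factorial : ℝ))) ≠ 0 := by positivity
  refine ⟨C (1 / (2 ^ (r + n) * (n.factorial : ℝ))) * Q, fun z hz => ?_, ?_, ?_, ?_⟩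
  · rw [legP_eq, hQ]
    simp only [eval_mul, eval_pow, eval_add, eval_X, eval_C]
    rw [add_comm z 1]
    field_simp
  · rw [degree_C_mul hc, degree_eq_natDegree hQ0, hdeg]
  · rw [coeff_C_mul, ← hdeg, coeff_natDegree, hlead, hdeg, ← hfac]
    field_simp
  · rw [legP_eq, eval_one_derivative_rodPoly]
    norm_num
    field_simp
    ring
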